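/- Let A and B be n×n Hermitian complex matrices, and let the eigenvalues of A, B, and A+B be arranged in ascending order as λ_1 ≤ λ_2 ≤ … ≤ λ_n. Then for every index i ∈ {1,…,n} and every j ∈ {1,…,i}, one has λ_{i−j+1}(A) + λ_j(B) ≤ λ_i(A+B). -/

import Mathlib

/-- The eigenvalues of a Hermitian matrix, arranged in ascending order
(`sortedEigenvalues hA k` is the `(k+1)`-st smallest eigenvalue of `A`). -/
noncomputable def sortedEigenvalues {n : ℕ} {A : Matrix (Fin n) (Fin n) ℂ}
    (hA : A.IsHermitian) : Fin n → ℝ :=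
  hA.eigenvalues ∘ Tuple.sort hA.eigenvalues

open scoped InnerProductSpace

/-- The orthonormal basis of eigenvectors matching `sortedEigenvalues`. -/
noncomputable def sortedEigenvectorBasis {n : ℕ} {A : Matrix (Fin n) (Fin n) ℂ}
    (hA : A.IsHermitian) : OrthonormalBasis (Fin n) ℂ (EuclideanSpace ℂ (Fin n)) :=
  hA.eigenvectorBasis.reindex (Tuple.sort hA.eigenvalues).symm

theorem sortedEigenvalues_monotone {n : ℕ} {A : Matrix (Fin n) (Fin n) ℂ}
    (hA : A.IsHermitian) : Monotone (sortedEigenvalues hA) :=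
  Tuple.monotone_sort hA.eigenvalues

theorem toEuclideanLin_sortedEigenvectorBasis {n : ℕ} {A : Matrix (Fin n) (Fin n) ℂ}
    (hA : A.IsHermitian) (k : Fin n) :
    Matrix.toEuclideanLin A (sortedEigenvectorBasis hA k) =
      (sortedEigenvalues hA k : ℂ) • sortedEigenvectorBasis hA k := by
  ext l
  have h := congrFun (hA.mulVec_eigenvectorBasis (Tuple.sort hA.eigenvalues k)) l
  simpa [sortedEigenvectorBasis, sortedEigenvalues, Matrix.toLpLin_apply] using h

/-- The quadratic form of a Hermitian matrix in its eigenbasis. -/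
theorem re_inner_toEuclideanLin_eq_sum {n : ℕ} {A : Matrix (Fin n) (Fin n) ℂ}
    (hA : A.IsHermitian) (x : EuclideanSpace ℂ (Fin n)) :
    (⟪x, Matrix.toEuclideanLin A x⟫_ℂ).re =
      ∑ k, sortedEigenvalues hA k * ‖⟪sortedEigenvectorBasis hA k, x⟫_ℂ‖ ^ 2 := by
  rw [← (sortedEigenvectorBasis hA).sum_inner_mul_inner, Complex.re_sum]
  refine Finset.sum_congr rfl fun k _ => ?_
  have hsymm := Matrix.isSymmetric_toEuclideanLin_iff.mpr hA
  rw [← hsymm, toEuclideanLin_sortedEigenvectorBasis, inner_smul_left, Complex.conj_ofReal,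
    mul_left_comm, Complex.re_ofReal_mul, ← RCLike.re_eq_complex_re,
    inner_mul_symm_re_eq_norm, norm_mul,
    norm_inner_symm x, sq]

/-- A vector orthogonal to the first `p` eigenvectors has Rayleigh quotient at least the
eigenvalue of index `p`. -/
theorem sortedEigenvalues_mul_le_re_inner {n : ℕ} {A : Matrix (Fin n) (Fin n) ℂ}
    (hA : A.IsHermitian) (p : Fin n) (x : EuclideanSpace ℂ (Fin n))
    (hx : ∀ k < p, ⟪sortedEigenvectorBasis hA k, x⟫_ℂ = 0) :
    sortedEigenvalues hA p * ‖x‖ ^ 2 ≤ (⟪x, Matrix.toEuclideanLin A x⟫_ℂ).re := by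
  rw [re_inner_toEuclideanLin_eq_sum hA, ← (sortedEigenvectorBasis hA).sum_sq_norm_inner_right x,
    Finset.mul_sum]
  refine Finset.sum_le_sum fun k _ => ?_
  rcases lt_or_ge k p with hk | hk
  · simp [hx k hk]
  · exact mul_le_mul_of_nonneg_right (sortedEigenvalues_monotone hA hk) (sq_nonneg _)

/-- A vector orthogonal to the eigenvectors of index above `p` has Rayleigh quotient at most the
eigenvalue of index `p`. -/
theorem re_inner_le_sortedEigenvalues_mul {n : ℕ} {A : Matrix (Fin n) (Fin n) ℂ}
    (hA : A.IsHermitian) (p : Fin n) (x : EuclideanSpace ℂ (Fin n))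
    (hx : ∀ k, p < k → ⟪sortedEigenvectorBasis hA k, x⟫_ℂ = 0) :
    (⟪x, Matrix.toEuclideanLin A x⟫_ℂ).re ≤ sortedEigenvalues hA p * ‖x‖ ^ 2 := by
  rw [re_inner_toEuclideanLin_eq_sum hA, ← (sortedEigenvectorBasis hA).sum_sq_norm_inner_right x,
    Finset.mul_sum]
  refine Finset.sum_le_sum fun k _ => ?_
  rcases lt_or_ge p k with hk | hk
  · simp [hx k hk]
  · exact mul_le_mul_of_nonneg_right (sortedEigenvalues_monotone hA hk) (sq_nonneg _)

/-- Fewer vectors than the dimension admit a common nonzero orthogonal vector. -/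
theorem exists_ne_zero_forall_inner_eq_zero {𝕜 E ι : Type*} [RCLike 𝕜] [NormedAddCommGroup E]
    [InnerProductSpace 𝕜 E] [FiniteDimensional 𝕜 E] [Fintype ι] (v : ι → E)
    (h : Fintype.card ι < Module.finrank 𝕜 E) :
    ∃ x : E, x ≠ 0 ∧ ∀ k, ⟪v k, x⟫_𝕜 = 0 := by
  have hker := LinearMap.ker_ne_bot_of_finrank_lt
    (f := LinearMap.pi fun k => (innerSL 𝕜 (v k)).toLinearMap) (by simpa using h)
  obtain ⟨x, hx, hx0⟩ := Submodule.exists_mem_ne_zero_of_ne_bot hker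
  exact ⟨x, hx0, fun k => by simpa using congrFun (LinearMap.mem_ker.mp hx) k⟩

/-- Weyl's inequality (lower bound): for Hermitian `A, B` and `1 ≤ i ≤ n`, `1 ≤ j ≤ i`,
`λ_{i-j+1}(A) + λ_j(B) ≤ λ_i(A+B)` (eigenvalues in ascending order, 1-based indices). -/
theorem weyl_inequality_lower {n : ℕ} (A B : Matrix (Fin n) (Fin n) ℂ)
    (hA : A.IsHermitian) (hB : B.IsHermitian)
    (i j : ℕ) (hi1 : 1 ≤ i) (hin : i ≤ n) (hj1 : 1 ≤ j) (hji : j ≤ i) :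
    sortedEigenvalues hA ⟨i - j + 1 - 1, by omega⟩ +
        sortedEigenvalues hB ⟨j - 1, by omega⟩ ≤
      sortedEigenvalues (hA.add hB) ⟨i - 1, by omega⟩ := by
  set p : Fin n := ⟨i - j + 1 - 1, by omega⟩ with hp
  set q : Fin n := ⟨j - 1, by omega⟩ with hq
  set r : Fin n := ⟨i - 1, by omega⟩ with hr
  obtain ⟨x, hx0, hx⟩ := exists_ne_zero_forall_inner_eq_zero (𝕜 := ℂ)
    (Sum.elim (fun k : Finset.Iio p => sortedEigenvectorBasis hA k)
      (Sum.elim (fun k : Finset.Iio q => sortedEigenvectorBasis hB k)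
        (fun k : Finset.Ioi r => sortedEigenvectorBasis (hA.add hB) k)))
    (by
      simp only [Fintype.card_sum, Fintype.card_coe, Fin.card_Iio, Fin.card_Ioi,
        finrank_euclideanSpace_fin, hp, hq, hr]
      omega)
  have hAx := sortedEigenvalues_mul_le_re_inner hA p x fun k hk =>
    hx (.inl ⟨k, Finset.mem_Iio.mpr hk⟩)
  have hBx := sortedEigenvalues_mul_le_re_inner hB q x fun k hk =>
    hx (.inr (.inl ⟨k, Finset.mem_Iio.mpr hk⟩))
  have hABx := re_inner_le_sortedEigenvalues_mul (hA.add hB) r x fun k hk =>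
    hx (.inr (.inr ⟨k, Finset.mem_Ioi.mpr hk⟩))
  rw [map_add, LinearMap.add_apply, inner_add_right, Complex.add_re] at hABx
  have hpos : 0 < ‖x‖ ^ 2 := by positivity
  refine le_of_mul_le_mul_right ?_ hpos
  linarith
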